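/- arXiv:2605.14864 — 2 statements merged into one kernel-verified Lean document; each statement's English description precedes it below -/
import Mathlib

section
/- Let A be a ring and I a two-sided ideal with I² = I, and let p : A → A/I be the quotient map. Then Ext¹_A(A/I, A/I) = 0 (as right A-modules). -/
open CategoryTheory

universe w

theorem ext_one_aux {R : Type} [Ring R] [HasExt.{w} (ModuleCat.{0} R)] {M N : Type}
    [AddCommGroup M] [Module R M] [AddCommGroup N] [Module R N] (f : R →ₗ[R] M)
    (hf : Function.Surjective f) (h0 : ∀ g : LinearMap.ker f →ₗ[R] N, g = 0) :
    Subsingleton (Abelian.Ext.{w} (ModuleCat.of R M) (ModuleCat.of R N) 1) := by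
  let S : ShortComplex (ModuleCat.{0} R) :=
    ShortComplex.mk (ModuleCat.ofHom (LinearMap.ker f).subtype) (ModuleCat.ofHom f)
      (by ext x; exact x.2)
  have hS : S.ShortExact :=
    { exact := by
        rw [ShortComplex.moduleCat_exact_iff]
        intro x hx
        exact ⟨⟨x, hx⟩, rfl⟩
      mono_f := (ModuleCat.mono_iff_injective _).2 Subtype.val_injective
      epi_g := (ModuleCat.epi_iff_surjective _).2 hf }
  have : Projective S.X₂ := (IsProjective.iff_projective (R := R) R).1 inferInstance
  refine subsingleton_of_forall_eq 0 fun x => ?_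
  obtain ⟨y, rfl⟩ := Abelian.Ext.contravariant_sequence_exact₃ hS (ModuleCat.of R N) x
    (Abelian.Ext.eq_zero_of_projective _) (n₀ := 0) rfl
  obtain ⟨g, rfl⟩ := (Abelian.Ext.mk₀_bijective _ _).2 y
  have hg : g = 0 := by
    ext1
    exact h0 g.hom
  rw [hg, Abelian.Ext.mk₀_zero, Abelian.Ext.comp_zero]

/-- Let `A` be a ring and `I` a two-sided ideal with `I² = I` (the additive
subgroup generated by products of two elements of `I` is all of `I`). Let `p : A → A/I` be the
quotient map. Then `Ext¹_A(A/I, A/I) = 0` where Ext is computed in the category of right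
`A`-modules (i.e. left `Aᵐᵒᵖ`-modules), and `A/I` is a right `A`-module via `p`. -/
theorem stmt1 (A : Type) [Ring A] (I : TwoSidedIdeal A)
    (hI : ∀ x : A, x ∈ AddSubgroup.closure {y : A | ∃ a ∈ I, ∃ b ∈ I, y = a * b} ↔ x ∈ I) :
    letI : Module Aᵐᵒᵖ I.ringCon.Quotient :=
      Module.compHom I.ringCon.Quotient (RingHom.op I.ringCon.mk')
    letI : HasDerivedCategory (ModuleCat.{0} Aᵐᵒᵖ) := HasDerivedCategory.standard _
    letI : HasExt.{1} (ModuleCat.{0} Aᵐᵒᵖ) := hasExt_of_hasDerivedCategory _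
    Subsingleton (Abelian.Ext (ModuleCat.of Aᵐᵒᵖ I.ringCon.Quotient)
      (ModuleCat.of Aᵐᵒᵖ I.ringCon.Quotient) 1) := by
  letI : Module Aᵐᵒᵖ I.ringCon.Quotient :=
    Module.compHom I.ringCon.Quotient (RingHom.op I.ringCon.mk')
  letI : HasDerivedCategory (ModuleCat.{0} Aᵐᵒᵖ) := HasDerivedCategory.standard _
  letI : HasExt.{1} (ModuleCat.{0} Aᵐᵒᵖ) := hasExt_of_hasDerivedCategory _
  let f : Aᵐᵒᵖ →ₗ[Aᵐᵒᵖ] I.ringCon.Quotient :=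
    { toFun := fun r => I.ringCon.mk' r.unop
      map_add' := fun a b => map_add I.ringCon.mk' a.unop b.unop
      map_smul' := fun a b => map_mul I.ringCon.mk' b.unop a.unop }
  have key : ∀ a : A, I.ringCon.mk' a = 0 ↔ a ∈ I := fun a => by
    rw [TwoSidedIdeal.mem_iff]
    exact RingCon.eq I.ringCon (a := a) (b := 0)
  refine ext_one_aux f (fun q => ?_) (fun g => ?_)
  · obtain ⟨a, rfl⟩ := RingCon.mk'_surjective I.ringCon q
    exact ⟨MulOpposite.op a, rfl⟩
  · have main : ∀ a ∈ AddSubgroup.closure {y : A | ∃ a ∈ I, ∃ b ∈ I, y = a * b},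
        ∀ h : MulOpposite.op a ∈ LinearMap.ker f, g ⟨MulOpposite.op a, h⟩ = 0 := by
      intro x hx
      have hm : ∀ y ∈ AddSubgroup.closure {y : A | ∃ a ∈ I, ∃ b ∈ I, y = a * b},
        MulOpposite.op y ∈ LinearMap.ker f := fun y hy => (key y).2 ((hI y).1 hy)
      induction hx using AddSubgroup.closure_induction with
      | mem x hx =>
        obtain ⟨a, ha, b, hb, rfl⟩ := hx
        intro h
        have h1 := g.map_smul (MulOpposite.op b) ⟨MulOpposite.op a, (key a).2 ha⟩
        refine Eq.trans h1 ?_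
        change _ * I.ringCon.mk' b = 0
        rw [(key b).2 hb, mul_zero]
      | zero => intro h; exact g.map_zero
      | add x y hx hy ihx ihy =>
        intro h
        refine (g.map_add ⟨_, hm x hx⟩ ⟨_, hm y hy⟩).trans ?_
        rw [ihx, ihy, add_zero]
      | neg x hx ih =>
        intro h
        refine (g.map_neg ⟨_, hm x hx⟩).trans ?_
        rw [ih, neg_zero]
    ext ⟨x, hx⟩
    exact main x.unop ((hI _).2 ((key _).1 hx)) hx
end

section
/- Let p : A → B be a surjection of algebras with A a Gorenstein R-order over a local CM ring of dimension 3, B finite dimensional, self-injective, and perfect over A. Then Ext¹_A(B, B) = 0 implies (ker p)² = ker p. -/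
open CategoryTheory

/-- Ext groups exist for module categories (in the `w = 1` universe). -/
noncomputable instance hasExtModuleCat (S : Type) [Ring S] : HasExt.{1} (ModuleCat.{0} S) := by
  letI := HasDerivedCategory.standard (ModuleCat.{0} S)
  exact hasExt_of_hasDerivedCategory _

section GorensteinOrder
variable (R : Type) [CommRing R] (ω : Type) [AddCommGroup ω] [Module R ω]
variable (A : Type) [Ring A] [Algebra R A]

/-- The left `A`-action `(a • f) x = f (x * a)` on `Hom_R(A, ω)`. -/
noncomputable def homLeftAct (a : A) (f : A →ₗ[R] ω) : A →ₗ[R] ω :=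
  f ∘ₗ LinearMap.mulRight R a

/-- The right `A`-action `(f • b) x = f (b * x)` on `Hom_R(A, ω)`. -/
noncomputable def homRightAct (f : A →ₗ[R] ω) (b : A) : A →ₗ[R] ω :=
  f ∘ₗ LinearMap.mulLeft R b

/-- `A` is a *Gorenstein `R`-order* (with respect to the (canonical) module `ω`):
`RHom_R(A, ω) ≅ A` as `A`-bimodules, expressed by an additive isomorphism
`Hom_R(A, ω) ≅ A` compatible with both `A`-actions, together with the vanishing of
`Ext^i_R(A, ω)` for `i > 0`. -/
noncomputable def IsGorensteinOrder : Prop :=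
  (∃ e : (A →ₗ[R] ω) ≃+ A,
      (∀ (a : A) (f : A →ₗ[R] ω), e (homLeftAct R ω A a f) = a * e f) ∧
      (∀ (f : A →ₗ[R] ω) (b : A), e (homRightAct R ω A f b) = e f * b)) ∧
  (∀ i : ℕ, 0 < i →
    Subsingleton (Abelian.Ext (ModuleCat.of R A) (ModuleCat.of R ω) i))

end GorensteinOrder

/-- A surjection `p : A → B` makes `B` a right `A`-module. -/
noncomputable def rightModOfHom (A B : Type) [Ring A] [Ring B] (p : A →+* B) :
    Module Aᵐᵒᵖ B :=
  Module.compHom B (RingHom.op p)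


theorem aux_simple_iso (C : Type) [Ring C] [IsArtinianRing C] (T₁ T₂ : Type)
    [AddCommGroup T₁] [Module C T₁] [AddCommGroup T₂] [Module C T₂]
    [IsSimpleModule C T₁] [IsSimpleModule C T₂]
    (h : Module.annihilator C T₁ ≤ Module.annihilator C T₂) : Nonempty (T₁ ≃ₗ[C] T₂) := by
  classical
  have hnt := IsSimpleModule.nontrivial C T₂
  obtain ⟨t, ht⟩ := exists_ne (0 : T₂)
  obtain ⟨s, hs⟩ := Finset.exists_inf_le
    (fun x : T₁ => LinearMap.ker (LinearMap.toSpanSingleton C T₁ x))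
  have key : ∀ s : Finset T₁,
      s.inf (fun x : T₁ => LinearMap.ker (LinearMap.toSpanSingleton C T₁ x)) ≤
        LinearMap.ker (LinearMap.toSpanSingleton C T₂ t) → Nonempty (T₁ ≃ₗ[C] T₂) := by
    intro s
    induction s using Finset.induction_on with
    | empty =>
      intro hle
      have : (1 : C) ∈ LinearMap.ker (LinearMap.toSpanSingleton C T₂ t) := hle (by simp)
      simp at this
      exact absurd this ht
    | insert x s hx ih =>
      intro hle
      rw [Finset.inf_insert] at hle
      by_cases hJ : s.inf (fun x : T₁ => LinearMap.ker (LinearMap.toSpanSingleton C T₁ x)) ≤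
        LinearMap.ker (LinearMap.toSpanSingleton C T₂ t)
      · exact ih hJ
      · set J := s.inf (fun x : T₁ => LinearMap.ker (LinearMap.toSpanSingleton C T₁ x)) with hJd
        let g : J →ₗ[C] T₁ := (LinearMap.toSpanSingleton C T₁ x).comp J.subtype
        let k : J →ₗ[C] T₂ := (LinearMap.toSpanSingleton C T₂ t).comp J.subtype
        have hgk : LinearMap.ker g ≤ LinearMap.ker k := by
          intro j hj
          exact hle ⟨hj, j.2⟩
        have hk : k ≠ 0 := by
          intro h0
          apply hJ
          intro j hj
          exact LinearMap.congr_fun h0 ⟨j, hj⟩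
        have hg : g ≠ 0 := by
          intro h0
          apply hk
          rw [h0, LinearMap.ker_zero] at hgk
          exact LinearMap.ker_eq_top.mp (top_le_iff.mp hgk)
        have hgs : Function.Surjective g := LinearMap.surjective_of_ne_zero hg
        let m : T₁ →ₗ[C] T₂ := ((LinearMap.ker g).liftQ k hgk).comp
          (g.quotKerEquivOfSurjective hgs).symm.toLinearMap
        have hm : m ≠ 0 := by
          intro h0
          apply hk
          ext j
          have := LinearMap.congr_fun h0 (g j)
          have e : (g.quotKerEquivOfSurjective hgs).symm (g j) = Submodule.Quotient.mk j := by
            rw [LinearEquiv.symm_apply_eq]; rfl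
          simp only [m, LinearMap.comp_apply, LinearEquiv.coe_coe, e] at this
          simpa using this
        exact ⟨LinearEquiv.ofBijective m (LinearMap.bijective_of_ne_zero hm)⟩
  refine key s fun c hc => ?_
  have : c ∈ Module.annihilator C T₁ := by
    rw [Module.mem_annihilator]
    intro x
    exact hs x hc
  exact Module.mem_annihilator.mp (h this) t

theorem aux_finite (C : Type) [Ring C] [IsArtinianRing C] :
    {n : Ideal C | ∃ (T : Type) (_ : AddCommGroup T) (_ : Module C T) (_ : IsSimpleModule C T),
      n = Module.annihilator C T}.Finite := by
  classical
  set P := {n : Ideal C | ∃ (T : Type) (_ : AddCommGroup T) (_ : Module C T)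
    (_ : IsSimpleModule C T), n = Module.annihilator C T} with hP
  obtain ⟨s, hs⟩ := Finset.exists_inf_le (Subtype.val (p := fun n : Ideal C => n ∈ P))
  refine (s.image Subtype.val).finite_toSet.subset ?_
  intro n hn
  obtain ⟨T, i1, i2, i3, rfl⟩ := id hn
  have hnt := IsSimpleModule.nontrivial C T
  have h1 : s.inf Subtype.val ≤ Module.annihilator C T := hs ⟨_, hn⟩
  have key : ∀ s : Finset {n : Ideal C // n ∈ P}, ∀ t : T, t ≠ 0 →
      (∀ c ∈ s.inf Subtype.val, c • t = 0) → ∃ n ∈ s, n.1 ≤ Module.annihilator C T := by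
    intro s
    induction s using Finset.induction_on with
    | empty =>
      intro t ht h
      exact absurd (by simpa using h 1 (by simp)) ht
    | insert a s ha ih =>
      intro t ht h
      by_cases h2 : a.1 ≤ Module.annihilator C T
      · exact ⟨a, by simp, h2⟩
      · obtain ⟨c, hc, hc'⟩ := Set.not_subset.mp h2
        simp only [SetLike.mem_coe, Module.mem_annihilator, not_forall] at hc'
        obtain ⟨u, hu⟩ := hc'
        obtain ⟨d, hd⟩ := IsSimpleModule.toSpanSingleton_surjective C ht u
        simp only [LinearMap.toSpanSingleton_apply] at hd
        have hcd : c * d ∈ a.1 := by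
          obtain ⟨T', j1, j2, j3, e⟩ := a.2
          rw [e] at hc ⊢
          exact Ideal.mul_mem_right _ _ hc
        obtain ⟨n, hn, hle⟩ := ih ((c * d) • t) (by rwa [mul_smul, hd]) (by
          intro x hx
          rw [← mul_smul]
          apply h
          rw [Finset.inf_insert]
          refine ⟨Ideal.mul_mem_left _ _ hcd, ?_⟩
          have : (s.inf Subtype.val : Ideal C).IsTwoSided := by
            constructor
            intro y b hy
            rw [Submodule.mem_finsetInf] at hy ⊢
            intro i hi
            obtain ⟨T', j1, j2, j3, e⟩ := i.2
            have := hy i hi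
            rw [e] at this ⊢
            exact Ideal.mul_mem_right _ _ this
          exact Ideal.mul_mem_right _ _ hx)
        exact ⟨n, by simp [hn], hle⟩
  obtain ⟨t, ht⟩ := exists_ne (0 : T)
  obtain ⟨n, hn, hle⟩ := key s t ht (fun c hc => Module.mem_annihilator.mp (h1 hc) t)
  obtain ⟨T', j1, j2, j3, e⟩ := n.2
  rw [e] at hle
  obtain ⟨f⟩ := aux_simple_iso C T' T hle
  simp only [Finset.coe_image, Set.mem_image]
  exact ⟨n, hn, by rw [e, f.annihilator_eq]⟩

theorem aux_exists_simple (C : Type) [Ring C] (J : Ideal C) [J.IsTwoSided] (hJ : J ≠ ⊤) :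
    ∃ L : Ideal C, L.IsMaximal ∧ J ≤ Module.annihilator C (C ⧸ L) := by
  obtain ⟨L, hL, hle⟩ := Ideal.exists_le_maximal J hJ
  refine ⟨L, hL, fun c hc => ?_⟩
  rw [Module.mem_annihilator]
  intro m
  obtain ⟨m, rfl⟩ := Submodule.Quotient.mk_surjective _ m
  rw [← Submodule.Quotient.mk_smul, Submodule.Quotient.mk_eq_zero]
  exact hle (Ideal.mul_mem_right _ _ hc)

theorem aux_left_right (B : Type) [Ring B] [IsArtinianRing Bᵐᵒᵖ] (S : Type)
    [AddCommGroup S] [Module Bᵐᵒᵖ S] [IsSimpleModule Bᵐᵒᵖ S] :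
    ∃ L : Ideal B, L.IsMaximal ∧
      ∀ b : B, b ∈ Module.annihilator B (B ⧸ L) ↔ MulOpposite.op b ∈ Module.annihilator Bᵐᵒᵖ S := by
  have hnt := IsSimpleModule.nontrivial Bᵐᵒᵖ S
  let J : Ideal B :=
    { carrier := {b | MulOpposite.op b ∈ Module.annihilator Bᵐᵒᵖ S}
      add_mem' := fun {a b} ha hb => by
        simp only [Set.mem_ofPred_eq, MulOpposite.op_add] at *
        exact add_mem ha hb
      zero_mem' := by simp
      smul_mem' := fun c x hx => by
        simp only [Set.mem_ofPred_eq, smul_eq_mul, MulOpposite.op_mul] at *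
        exact Ideal.mul_mem_right _ _ hx }
  have hJt : J.IsTwoSided := ⟨fun {a} b ha => by
    change MulOpposite.op (a * b) ∈ Module.annihilator Bᵐᵒᵖ S
    rw [MulOpposite.op_mul]
    exact Ideal.mul_mem_left _ _ ha⟩
  have hJ : J ≠ ⊤ := by
    intro h
    have h1 : (1 : B) ∈ J := h ▸ Submodule.mem_top
    have h2 : (MulOpposite.op (1 : B)) ∈ Module.annihilator Bᵐᵒᵖ S := h1
    obtain ⟨s, hs⟩ := exists_ne (0 : S)
    exact hs (by simpa using Module.mem_annihilator.mp h2 s)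
  obtain ⟨L, hL, hle⟩ := aux_exists_simple B J hJ
  let J' : Ideal Bᵐᵒᵖ :=
    { carrier := {b | MulOpposite.unop b ∈ Module.annihilator B (B ⧸ L)}
      add_mem' := fun {a b} ha hb => by
        simp only [Set.mem_ofPred_eq, MulOpposite.unop_add] at *
        exact add_mem ha hb
      zero_mem' := by simp
      smul_mem' := fun c x hx => by
        simp only [Set.mem_ofPred_eq, smul_eq_mul, MulOpposite.unop_mul] at *
        exact Ideal.mul_mem_right _ _ hx }
  have hJt' : J'.IsTwoSided := ⟨fun {a} b ha => by
    change MulOpposite.unop (a * b) ∈ Module.annihilator B (B ⧸ L)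
    rw [MulOpposite.unop_mul]
    exact Ideal.mul_mem_left _ _ ha⟩
  have hJ' : J' ≠ ⊤ := by
    intro h
    have h1 : (1 : Bᵐᵒᵖ) ∈ J' := h ▸ Submodule.mem_top
    have h2 : (1 : B) ∈ Module.annihilator B (B ⧸ L) := h1
    have h3 := Module.mem_annihilator.mp h2 (Submodule.Quotient.mk 1)
    rw [one_smul, Submodule.Quotient.mk_eq_zero] at h3
    exact hL.ne_top ((Ideal.eq_top_iff_one _).mpr h3)
  obtain ⟨L', hL', hle'⟩ := aux_exists_simple Bᵐᵒᵖ J' hJ'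
  have : IsSimpleModule Bᵐᵒᵖ (Bᵐᵒᵖ ⧸ L') := isSimpleModule_iff_isCoatom.mpr hL'.out
  obtain ⟨e⟩ := aux_simple_iso Bᵐᵒᵖ S (Bᵐᵒᵖ ⧸ L') (fun c hc => hle' (hle (show c.unop ∈ J from hc)))
  refine ⟨L, hL, fun b => ⟨fun hb => ?_, fun hb => hle hb⟩⟩
  rw [e.annihilator_eq]
  exact hle' hb

theorem aux_rann_ne (B : Type) [Ring B] [IsNoetherianRing B]
    (hinj : Module.Injective Bᵐᵒᵖ B) (L : Ideal B) (hL : L ≠ ⊤) :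
    ∃ x : B, x ≠ 0 ∧ ∀ l ∈ L, l * x = 0 := by
  by_contra hcon
  push Not at hcon
  obtain ⟨s, hs⟩ := (isNoetherianRing_iff_ideal_fg B).mp inferInstance L
  let f : B →ₗ[Bᵐᵒᵖ] (s → B) :=
    { toFun := fun b i => i.1 * b
      map_add' := fun a b => by ext i; simp [mul_add]
      map_smul' := fun c b => by ext i; simp [mul_assoc] }
  have hf : Function.Injective f := by
    rw [injective_iff_map_eq_zero]
    intro b hb
    by_contra hb0
    obtain ⟨l, hl, hlb⟩ := hcon b hb0
    apply hlb
    have : L ≤ LinearMap.ker (LinearMap.toSpanSingleton B B b) := by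
      rw [← hs]
      refine Submodule.span_le.mpr fun x hx => ?_
      exact congrFun hb ⟨x, hx⟩
    exact this hl
  obtain ⟨h, hh⟩ := hinj.out f hf LinearMap.id
  apply hL
  rw [Ideal.eq_top_iff_one]
  have h1 := hh 1
  rw [LinearMap.id_apply] at h1
  rw [← h1]
  classical
  rw [← Finset.univ_sum_single (f 1), map_sum]
  refine Ideal.sum_mem _ fun i _ => ?_
  have h2 : Pi.single i (f 1 i) =
      MulOpposite.op i.1 • LinearMap.single Bᵐᵒᵖ (fun _ : s => B) i 1 := by
    rw [← map_smul, LinearMap.single_apply]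
    congr 1
    simp [f]
  rw [h2, map_smul]
  exact Ideal.mul_mem_left _ _ (hs ▸ Submodule.subset_span i.2)

theorem aux_good (B : Type) [Ring B] [IsNoetherianRing B] [IsArtinian Bᵐᵒᵖ B]
    (hinj : Module.Injective Bᵐᵒᵖ B) (L : Ideal B) (hL : L.IsMaximal) :
    ∃ y : B, y ≠ 0 ∧ IsSimpleModule Bᵐᵒᵖ (Submodule.span Bᵐᵒᵖ {y}) ∧
      (∀ b : B, b ∈ L ↔ b * y = 0) := by
  obtain ⟨x, hx, hLx⟩ := aux_rann_ne B hinj L hL.ne_top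
  obtain ⟨N, hN, hNx⟩ := (eq_bot_or_exists_atom_le (Submodule.span Bᵐᵒᵖ {x})).resolve_left
    (by simpa using hx)
  obtain ⟨y, hyN, hy⟩ := N.exists_mem_ne_zero_of_ne_bot hN.1
  have hspan : Submodule.span Bᵐᵒᵖ {y} = N :=
    (hN.le_iff.mp ((Submodule.span_singleton_le_iff_mem _ _).mpr hyN)).resolve_left
      (by simpa using hy)
  obtain ⟨c, rfl⟩ := Submodule.mem_span_singleton.mp (hNx hyN)
  have hz : ∀ b ∈ L, b * (c • x) = 0 := fun b hb => by
    rw [mul_smul_comm, hLx b hb, smul_zero]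
  refine ⟨c • x, hy, ?_, fun b => ⟨hz b, fun hb => ?_⟩⟩
  · rw [hspan]; exact isSimpleModule_iff_isAtom.mpr hN
  · by_contra hbL
    have hle : L ≤ LinearMap.ker (LinearMap.toSpanSingleton B B (c • x)) := hz
    have htop : LinearMap.ker (LinearMap.toSpanSingleton B B (c • x)) ≠ ⊤ := by
      intro h
      have : (1 : B) ∈ LinearMap.ker (LinearMap.toSpanSingleton B B (c • x)) :=
        h ▸ Submodule.mem_top
      exact hy (by simpa using this)
    have := hL.eq_of_le htop hle
    exact hbL (this ▸ hb)

theorem aux_cogen (B : Type) [Ring B] [IsNoetherianRing B] [IsArtinianRing B]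
    [IsArtinianRing Bᵐᵒᵖ] [IsArtinian Bᵐᵒᵖ B]
    (hinj : Module.Injective Bᵐᵒᵖ B) (S : Type)
    [AddCommGroup S] [Module Bᵐᵒᵖ S] [IsSimpleModule Bᵐᵒᵖ S] :
    ∃ f : S →ₗ[Bᵐᵒᵖ] B, Function.Injective f := by
  let P := {n : Ideal B | ∃ (T : Type) (_ : AddCommGroup T) (_ : Module B T)
    (_ : IsSimpleModule B T), n = Module.annihilator B T}
  have hfin : Finite P := aux_finite B
  have hPmem : ∀ L : Ideal B, L.IsMaximal → Module.annihilator B (B ⧸ L) ∈ P := fun L hL =>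
    ⟨B ⧸ L, inferInstance, inferInstance, isSimpleModule_iff_isCoatom.mpr hL.out, rfl⟩
  have h1 : ∀ n : P, ∃ y : B, y ≠ 0 ∧ IsSimpleModule Bᵐᵒᵖ (Submodule.span Bᵐᵒᵖ {y}) ∧
      (∃ L : Ideal B, L.IsMaximal ∧ ∀ b : B, b ∈ L ↔ b * y = 0) ∧
      ∀ b : B, b ∈ n.1 ↔ ∀ c, b * c * y = 0 := by
    rintro ⟨n, T, i1, i2, i3, rfl⟩
    have hnt := IsSimpleModule.nontrivial B T
    have hne : Module.annihilator B T ≠ ⊤ := by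
      rw [Ne, Module.annihilator_eq_top_iff]
      exact not_subsingleton T
    obtain ⟨L, hL, hle⟩ := aux_exists_simple B _ hne
    have : IsSimpleModule B (B ⧸ L) := isSimpleModule_iff_isCoatom.mpr hL.out
    obtain ⟨e⟩ := aux_simple_iso B T (B ⧸ L) hle
    obtain ⟨y, hy, hs, hyL⟩ := aux_good B hinj L hL
    refine ⟨y, hy, hs, ⟨L, hL, hyL⟩, fun b => ?_⟩
    simp only
    rw [e.annihilator_eq, Module.mem_annihilator, (Submodule.Quotient.mk_surjective _).forall]
    refine forall_congr' fun c => ?_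
    rw [← Submodule.Quotient.mk_smul, Submodule.Quotient.mk_eq_zero, hyL, smul_eq_mul]
  choose y hy0 hys hyL hyn using h1
  have h2 : ∀ n : P, ∃ n' : P, ∀ b : B, b ∈ n'.1 ↔
      MulOpposite.op b ∈ Module.annihilator Bᵐᵒᵖ (Submodule.span Bᵐᵒᵖ {y n}) := by
    intro n
    have := hys n
    obtain ⟨L, hL, h⟩ := aux_left_right B (Submodule.span Bᵐᵒᵖ {y n})
    exact ⟨⟨_, hPmem L hL⟩, h⟩
  choose φ hφ using h2
  -- comparing
  have hle : ∀ n m : P, φ n = φ m → n.1 ≤ m.1 := by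
    intro n m hnm
    have i1 := hys n
    have i2 := hys m
    -- y m B ≅ y n B
    obtain ⟨e⟩ := aux_simple_iso Bᵐᵒᵖ (Submodule.span Bᵐᵒᵖ {y m}) (Submodule.span Bᵐᵒᵖ {y n})
      (fun c hc => by
        have h3 := (hφ m c.unop).mpr hc
        rw [← hnm] at h3
        exact (hφ n c.unop).mp h3)
    obtain ⟨g, hg⟩ := hinj.out (Submodule.span Bᵐᵒᵖ {y m}).subtype
      (Submodule.subtype_injective _)
      ((Submodule.span Bᵐᵒᵖ {y n}).subtype.comp e.toLinearMap)
    let ym : Submodule.span Bᵐᵒᵖ {y m} := ⟨y m, Submodule.mem_span_singleton_self _⟩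
    have hg1 : g 1 * y m = (e ym : B) := by
      have h3 : g (y m) = (e ym : B) := hg ym
      rw [← h3]
      have h4 : MulOpposite.op (y m) • (1 : B) = y m := by simp
      have h5 := g.map_smul (MulOpposite.op (y m)) 1
      rw [h4] at h5
      exact h5.symm
    have hne : (e ym : B) ≠ 0 := by
      intro h0
      have h4 : ym = 0 := by
        apply e.injective
        rw [map_zero]
        exact Subtype.ext h0
      exact hy0 m (congrArg Subtype.val h4)
    obtain ⟨c, hc⟩ := Submodule.mem_span_singleton.mp (e ym).2
    obtain ⟨L, hL, hLm⟩ := hyL m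
    -- g 1 ∉ L, so 1 = l + d * g 1
    have hgL : g 1 ∉ L := fun h => hne (by rw [← hg1]; exact (hLm _).mp h)
    obtain ⟨d, l, hl, hdl⟩ : ∃ d, ∃ l ∈ L, d * g 1 + l = 1 := by
      have h5 : Ideal.span {g 1} ⊔ L = ⊤ := by
        refine hL.out.2 _ (lt_of_le_of_ne le_sup_right fun h => hgL ?_)
        rw [h]
        exact Ideal.mem_sup_left (Ideal.mem_span_singleton_self _)
      have h6 : (1 : B) ∈ Ideal.span {g 1} ⊔ L := h5 ▸ Submodule.mem_top
      obtain ⟨u, hu, l, hl, hul⟩ := Submodule.mem_sup.mp h6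
      obtain ⟨d, rfl⟩ := Ideal.mem_span_singleton'.mp hu
      exact ⟨d, l, hl, hul⟩
    have hym : y m = d * (y n * c.unop) := by
      have h7 : y n * c.unop = g 1 * y m := by
        rw [hg1, ← hc]; rfl
      rw [h7]
      calc y m = (d * g 1 + l) * y m := by rw [hdl, one_mul]
        _ = d * (g 1 * y m) := by rw [add_mul, (hLm l).mp hl, add_zero, mul_assoc]
    intro b hb
    rw [hyn m]
    intro a
    rw [hym]
    have := (hyn n b).mp hb (a * d)
    calc b * a * (d * (y n * c.unop)) = (b * (a * d) * y n) * c.unop := by noncomm_ring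
      _ = 0 := by rw [this, zero_mul]
  have hinjφ : Function.Injective φ := fun n m h =>
    Subtype.ext (le_antisymm (hle n m h) (hle m n h.symm))
  have hsurj := Finite.injective_iff_surjective.mp hinjφ
  obtain ⟨L, hL, h⟩ := aux_left_right B S
  obtain ⟨n, hn⟩ := hsurj ⟨_, hPmem L hL⟩
  have i1 := hys n
  obtain ⟨e⟩ := aux_simple_iso Bᵐᵒᵖ S (Submodule.span Bᵐᵒᵖ {y n}) (fun c hc => by
    have h3 := (h c.unop).mpr hc
    refine (hφ n c.unop).mp ?_
    rw [hn]
    exact h3)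
  exact ⟨(Submodule.span Bᵐᵒᵖ {y n}).subtype.comp e.toLinearMap,
    (Submodule.subtype_injective _).comp e.injective⟩

theorem aux_ext (C : Type) [Ring C] (M N Q : Type) [AddCommGroup M] [Module C M]
    [AddCommGroup N] [Module C N] [AddCommGroup Q] [Module C Q]
    (π : M →ₗ[C] N) (hπ : Function.Surjective π)
    (hE : Subsingleton (Abelian.Ext (ModuleCat.of C N) (ModuleCat.of C Q) 1))
    (f : LinearMap.ker π →ₗ[C] Q) :
    ∃ g : M →ₗ[C] Q, ∀ x : LinearMap.ker π, g x = f x := by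
  have hS := LinearMap.shortExact_shortComplexKer hπ
  obtain ⟨x₂, hx₂⟩ := Abelian.Ext.contravariant_sequence_exact₁ hS (ModuleCat.of C Q)
    (Abelian.Ext.mk₀ (ModuleCat.ofHom f)) (n₁ := 1) rfl (Subsingleton.elim _ _)
  obtain ⟨g, rfl⟩ := (Abelian.Ext.mk₀_bijective _ _).2 x₂
  rw [Abelian.Ext.mk₀_comp_mk₀] at hx₂
  have h := (Abelian.Ext.mk₀_bijective _ _).1 hx₂
  refine ⟨g.hom, fun x => ?_⟩
  exact LinearMap.congr_fun (congrArg ModuleCat.Hom.hom h) x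

/-- Over a right self-injective artinian ring every maximal right ideal has a nonzero left
annihilator. -/
theorem aux_lann_ne (B : Type) [Ring B] [IsNoetherianRing B] [IsArtinianRing B]
    [IsArtinianRing Bᵐᵒᵖ] [IsArtinian Bᵐᵒᵖ B]
    (hinj : Module.Injective Bᵐᵒᵖ B) (m : Submodule Bᵐᵒᵖ B) (hm : m ≠ ⊤) :
    ∃ y : B, y ≠ 0 ∧ ∀ b ∈ m, y * b = 0 := by
  have : Module.Finite Bᵐᵒᵖ B := by
    refine Module.Finite.of_surjective (LinearMap.toSpanSingleton Bᵐᵒᵖ B 1) fun b => ?_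
    exact ⟨MulOpposite.op b, by simp⟩
  obtain ⟨m', hm', hle⟩ := (eq_top_or_exists_le_coatom m).resolve_left hm
  have : IsSimpleModule Bᵐᵒᵖ (B ⧸ m') := isSimpleModule_iff_isCoatom.mpr hm'
  obtain ⟨f, hf⟩ := aux_cogen B hinj (B ⧸ m')
  have hfy : ∀ b : B, f (Submodule.Quotient.mk 1) * b = f (Submodule.Quotient.mk b) := by
    intro b
    have h5 := (f.comp m'.mkQ).map_smul (MulOpposite.op b) 1
    have h4 : MulOpposite.op b • (1 : B) = b := by simp
    rw [h4] at h5
    exact h5.symm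
  refine ⟨f (Submodule.Quotient.mk 1), fun h0 => hm'.1 ?_, fun b hb => ?_⟩
  · rw [eq_top_iff]
    intro b _
    have h6 := hfy b
    rw [h0, zero_mul] at h6
    have := hf (h6.symm.trans (map_zero f).symm)
    exact (Submodule.Quotient.mk_eq_zero _).mp this
  · rw [hfy, (Submodule.Quotient.mk_eq_zero _).mpr (hle hb), map_zero]

/-- Let `p : A → B` be a surjection of algebras with `A` a Gorenstein
`R`-order over a local (Cohen-Macaulay) noetherian ring `R` of Krull dimension `3` with
canonical module `ω`, and `B` finite dimensional over a field `K`, self-injective (as a right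
module over itself), and perfect as a right `A`-module. Then `Ext¹_A(B, B) = 0` implies
`(ker p)² = ker p` (idempotency expressed via the additive closure of products). -/
theorem stmt16 (R : Type) [CommRing R] [IsNoetherianRing R] [IsLocalRing R]
    (hdim : ringKrullDim R = 3)
    (ω : Type) [AddCommGroup ω] [Module R ω] [Module.Finite R ω]
    (A : Type) [Ring A] [Algebra R A] [Module.Finite R A]
    (hGor : IsGorensteinOrder R ω A)
    (B : Type) [Ring B] (K : Type) [Field K] [Algebra K B] [FiniteDimensional K B]
    (hselfinj : Module.Injective Bᵐᵒᵖ B)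
    (p : A →+* B) (hp : Function.Surjective p) :
    letI : Module Aᵐᵒᵖ B := rightModOfHom A B p
    -- `B` is perfect as a right `A`-module:
    (Module.Finite Aᵐᵒᵖ B ∧
      ∃ n : ℕ, ∀ (L : ModuleCat.{0} Aᵐᵒᵖ) (i : ℕ), n < i →
        Subsingleton (Abelian.Ext (ModuleCat.of Aᵐᵒᵖ B) L i)) →
    -- `Ext¹_A(B, B) = 0` implies `(ker p)² = ker p`:
    Subsingleton (Abelian.Ext (ModuleCat.of Aᵐᵒᵖ B) (ModuleCat.of Aᵐᵒᵖ B) 1) →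
    ∀ x : A, x ∈ AddSubgroup.closure
        {y : A | ∃ a ∈ RingHom.ker p, ∃ b ∈ RingHom.ker p, y = a * b} ↔ x ∈ RingHom.ker p := by
  intro _ hE x
  letI : Module Aᵐᵒᵖ B := rightModOfHom A B p
  have hsm : ∀ (a : A) (b : B), MulOpposite.op a • b = b * p a := fun a b => rfl
  have : IsArtinianRing B := isArtinian_of_tower K inferInstance
  have : IsNoetherianRing B := isNoetherian_of_tower K inferInstance
  have : IsArtinian Bᵐᵒᵖ B := isArtinian_of_tower K inferInstance
  have : FiniteDimensional K Bᵐᵒᵖ := Module.Finite.equiv (MulOpposite.opLinearEquiv K (M := B))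
  have : IsArtinianRing Bᵐᵒᵖ := isArtinian_of_tower K inferInstance
  have : IsNoetherian R A := isNoetherian_of_isNoetherianRing_of_finite R A
  have : IsNoetherian Aᵐᵒᵖ A := isNoetherian_of_tower R inferInstance
  let π : A →ₗ[Aᵐᵒᵖ] B :=
    { toFun := p
      map_add' := map_add p
      map_smul' := fun c a => by
        change p (a * c.unop) = p a * p c.unop
        exact map_mul p _ _ }
  have hker : ∀ a, a ∈ LinearMap.ker π ↔ a ∈ RingHom.ker p := fun a => Iff.rfl
  -- all homs from the kernel vanish
  have hzero : ∀ f : LinearMap.ker π →ₗ[Aᵐᵒᵖ] B, f = 0 := by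
    intro f
    obtain ⟨g, hg⟩ := aux_ext Aᵐᵒᵖ A B B π hp hE f
    ext x
    rw [← hg x, LinearMap.zero_apply]
    have h5 := g.map_smul (MulOpposite.op x.1) 1
    have h4 : MulOpposite.op x.1 • (1 : A) = x.1 := by simp
    have h6 : p x.1 = 0 := x.2
    rw [h4, hsm, h6, mul_zero] at h5
    exact h5
  -- the square of the kernel as a right ideal
  let Q : Submodule Aᵐᵒᵖ A :=
    { AddSubgroup.closure
        {y : A | ∃ a ∈ RingHom.ker p, ∃ b ∈ RingHom.ker p, y = a * b} with
      smul_mem' := by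
        intro c z hz
        change z ∈ AddSubgroup.closure _ at hz
        change z * c.unop ∈ AddSubgroup.closure _
        induction hz using AddSubgroup.closure_induction with
        | mem z h =>
          obtain ⟨a, ha, b, hb, rfl⟩ := h
          refine AddSubgroup.subset_closure ⟨a, ha, b * c.unop, Ideal.mul_mem_right _ _ hb, ?_⟩
          rw [mul_assoc]
        | zero => rw [zero_mul]; exact zero_mem _
        | add u v _ _ hu hv => rw [add_mul]; exact add_mem hu hv
        | neg u _ hu => rw [neg_mul]; exact neg_mem hu }
  have hQ : ∀ z, z ∈ Q ↔ z ∈ AddSubgroup.closure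
        {y : A | ∃ a ∈ RingHom.ker p, ∃ b ∈ RingHom.ker p, y = a * b} := fun z => Iff.rfl
  have hQle : Q ≤ LinearMap.ker π := by
    intro z hz
    rw [hQ] at hz
    rw [hker]
    induction hz using AddSubgroup.closure_induction with
    | mem z h =>
      obtain ⟨a, ha, b, hb, rfl⟩ := h
      exact Ideal.mul_mem_left _ _ hb
    | zero => exact zero_mem _
    | add u v _ _ hu hv => exact add_mem hu hv
    | neg u _ hu => exact neg_mem hu
  rw [← hQ, ← hker]
  refine ⟨fun h => hQle h, fun hx => ?_⟩
  by_contra hxQ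
  -- a maximal right submodule `N` of the kernel containing its square
  let Q' : Submodule Aᵐᵒᵖ (LinearMap.ker π) := Q.comap (LinearMap.ker π).subtype
  have hQ' : Q' ≠ ⊤ := by
    intro h
    have h1 : (⟨x, hx⟩ : LinearMap.ker π) ∈ Q' := h ▸ Submodule.mem_top
    exact hxQ h1
  obtain ⟨N, hN, hle⟩ := (eq_top_or_exists_le_coatom Q').resolve_left hQ'
  have hsimp : IsSimpleModule Aᵐᵒᵖ (LinearMap.ker π ⧸ N) := isSimpleModule_iff_isCoatom.mpr hN
  obtain ⟨s, hs⟩ : ∃ s, s ∉ N := by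
    by_contra h
    push Not at h
    exact hN.1 (eq_top_iff.mpr fun z _ => h z)
  -- the right ideal of all `a` with `s a ∈ N`
  let θ : A →ₗ[Aᵐᵒᵖ] (LinearMap.ker π ⧸ N) :=
    { toFun := fun a => Submodule.Quotient.mk (MulOpposite.op a • s)
      map_add' := fun a b => by
        rw [MulOpposite.op_add, add_smul]; rfl
      map_smul' := fun c a => by
        have : MulOpposite.op (c • a) = c * MulOpposite.op a := by
          rw [← MulOpposite.op_unop c, ← MulOpposite.op_mul]; rfl
        rw [this, mul_smul]; rfl }
  have hθ : ∀ a, θ a = Submodule.Quotient.mk (MulOpposite.op a • s) := fun a => rfl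
  have hθ1 : θ 1 ≠ 0 := by
    rw [hθ, MulOpposite.op_one, one_smul, Ne, Submodule.Quotient.mk_eq_zero]
    exact hs
  have hθ0 : θ ≠ 0 := fun h => hθ1 (by rw [h]; rfl)
  have hθs : Function.Surjective θ := LinearMap.surjective_of_ne_zero hθ0
  have hθI : ∀ a, p a = 0 → θ a = 0 := by
    intro a ha
    rw [hθ, Submodule.Quotient.mk_eq_zero]
    refine hle ?_
    exact AddSubgroup.subset_closure ⟨s.1, s.2, a, ha, rfl⟩
  let m : Submodule Bᵐᵒᵖ B :=
    { carrier := {b | ∃ a, θ a = 0 ∧ p a = b}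
      add_mem' := by
        rintro _ _ ⟨a, ha, rfl⟩ ⟨b, hb, rfl⟩
        exact ⟨a + b, by rw [map_add, ha, hb, add_zero], map_add p a b⟩
      zero_mem' := ⟨0, map_zero θ, map_zero p⟩
      smul_mem' := by
        rintro c _ ⟨a, ha, rfl⟩
        obtain ⟨d, hd⟩ := hp c.unop
        refine ⟨MulOpposite.op d • a, by rw [map_smul, ha, smul_zero], ?_⟩
        change p (a * d) = p a * c.unop
        rw [map_mul, hd] }
  have hm : m ≠ ⊤ := by
    intro h
    obtain ⟨a, ha, ha1⟩ : (1 : B) ∈ m := h ▸ Submodule.mem_top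
    have h2 : θ (1 - a) = 0 := hθI _ (by rw [map_sub, map_one, ha1, sub_self])
    rw [map_sub, ha, sub_zero] at h2
    exact hθ1 h2
  obtain ⟨y, hy, hym⟩ := aux_lann_ne B hselfinj m hm
  let ψ : A →ₗ[Aᵐᵒᵖ] B :=
    { toFun := fun a => y * p a
      map_add' := fun a b => by rw [map_add, mul_add]
      map_smul' := fun c a => by
        change y * p (a * c.unop) = y * p a * p c.unop
        rw [map_mul, mul_assoc] }
  have hψ : LinearMap.ker θ ≤ LinearMap.ker ψ := fun a ha => hym _ ⟨a, ha, rfl⟩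
  let F : LinearMap.ker π →ₗ[Aᵐᵒᵖ] B := (((LinearMap.ker θ).liftQ ψ hψ).comp
    (θ.quotKerEquivOfSurjective hθs).symm.toLinearMap).comp N.mkQ
  have hF := LinearMap.congr_fun (hzero F) s
  have e1 : (θ.quotKerEquivOfSurjective hθs).symm (N.mkQ s) = Submodule.Quotient.mk 1 := by
    rw [LinearEquiv.symm_apply_eq]
    change N.mkQ s = θ 1
    rw [hθ, MulOpposite.op_one, one_smul]
    rfl
  have e2 : F s = ψ 1 := by
    change ((LinearMap.ker θ).liftQ ψ hψ) ((θ.quotKerEquivOfSurjective hθs).symm (N.mkQ s)) = _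
    rw [e1]
    rfl
  rw [e2] at hF
  apply hy
  have : y * p 1 = 0 := hF
  rwa [map_one, mul_one] at this
end
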